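/- Let A be a Hopf algebra over a field k with bijective antipode S and let x, y ∈ A. Then: (i) Δ(x)(1 ⊗ y) = x ⊗ y if and only if (1 ⊗ x)Δ(y) = (S(x) ⊗ 1)Δ(y); and (ii) (1 ⊗ y)Δ(x) = x ⊗ y if and only if Δ(y)(1 ⊗ x) = Δ(y)(S⁻¹(x) ⊗ 1). -/

import Mathlib

open scoped TensorProduct

noncomputable section

variable (k : Type*) [Field k] {A : Type*} [Ring A] [HopfAlgebra k A]

/-- `P` is a right group-like projection: a nonzero idempotent with
`Δ(P)(1 ⊗ P) = P ⊗ P = (1 ⊗ P)Δ(P)`. -/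
def IsRightGroupLikeProjection (P : A) : Prop :=
  P ≠ 0 ∧ P * P = P ∧
    Coalgebra.comul (R := k) P * ((1 : A) ⊗ₜ[k] P) = P ⊗ₜ[k] P ∧
    ((1 : A) ⊗ₜ[k] P) * Coalgebra.comul (R := k) P = P ⊗ₜ[k] P

/-- `P` is a left group-like projection: a nonzero idempotent with
`Δ(P)(P ⊗ 1) = P ⊗ P = (P ⊗ 1)Δ(P)`. -/
def IsLeftGroupLikeProjection (P : A) : Prop :=
  P ≠ 0 ∧ P * P = P ∧
    Coalgebra.comul (R := k) P * (P ⊗ₜ[k] (1 : A)) = P ⊗ₜ[k] P ∧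
    (P ⊗ₜ[k] (1 : A)) * Coalgebra.comul (R := k) P = P ⊗ₜ[k] P

/-- A two-sided group-like projection. -/
def IsTwoSidedGroupLikeProjection (P : A) : Prop :=
  IsRightGroupLikeProjection k P ∧ IsLeftGroupLikeProjection k P

/-- `N_P^l = {x : (1 ⊗ P)Δ(x) = x ⊗ P}`. -/
def NPlSet (P : A) : Set A :=
  {x : A | ((1 : A) ⊗ₜ[k] P) * Coalgebra.comul (R := k) x = x ⊗ₜ[k] P}

/-- `N_P^r = {x : Δ(x)(1 ⊗ P) = x ⊗ P}`. -/
def NPrSet (P : A) : Set A :=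
  {x : A | Coalgebra.comul (R := k) x * ((1 : A) ⊗ₜ[k] P) = x ⊗ₜ[k] P}

/-- `N_P = N_P^l ∩ N_P^r`. -/
def NPSet (P : A) : Set A := NPlSet k P ∩ NPrSet k P

/-- `V_P = {(μ ⊗ id)(Δ(P)) : μ ∈ A*}`, the smallest left coideal containing `P`. -/
def VPSet (P : A) : Set A :=
  {x : A | ∃ μ : A →ₗ[k] k,
    x = TensorProduct.lid k A ((TensorProduct.map μ LinearMap.id) (Coalgebra.comul (R := k) P))}

/-- A submodule `N ⊆ A` is a left coideal if `Δ(N) ⊆ A ⊗ N`. -/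
def IsLeftCoideal (N : Submodule k A) : Prop :=
  ∀ x ∈ N, Coalgebra.comul (R := k) x ∈
    LinearMap.range (TensorProduct.map (LinearMap.id : A →ₗ[k] A) N.subtype)

/-- A subalgebra `N ⊆ A` is a left coideal subalgebra if `Δ(N) ⊆ A ⊗ N`. -/
def IsLeftCoidealSubalgebra (N : Subalgebra k A) : Prop :=
  IsLeftCoideal k (Subalgebra.toSubmodule N)

open Coalgebra HopfAlgebra TensorProduct

/-- The map `a ⊗ b ↦ M(a, b₁) ⊗ b₂` attached to a bilinear map `M` on a coalgebra. -/
def comulTwist (M : A →ₗ[k] A →ₗ[k] A) : A ⊗[k] A →ₗ[k] A ⊗[k] A :=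
  TensorProduct.lift ((LinearMap.rTensorHom A ∘ₗ M).compl₂ comul)

@[simp]
lemma comulTwist_tmul (M : A →ₗ[k] A →ₗ[k] A) (a b : A) :
    comulTwist k M (a ⊗ₜ b) = (M a).rTensor A (comul b) := by
  simp [comulTwist]

lemma comulTwist_rTensor_comul (N : A →ₗ[k] A →ₗ[k] A) (f : A →ₗ[k] A) (a b : A)
    (h : ∀ c, TensorProduct.lift (N ∘ₗ f) (comul c) = counit (R := k) c • a) :
    comulTwist k N (f.rTensor A (comul b)) = a ⊗ₜ b := by
  have key : ∀ t : A ⊗[k] A, comulTwist k N (f.rTensor A t) =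
      (TensorProduct.lift (N ∘ₗ f)).rTensor A
        ((TensorProduct.assoc k A A A).symm (comul.lTensor A t)) := by
    intro t
    induction t with
    | zero => simp
    | add t₁ t₂ h₁ h₂ => simp only [map_add, h₁, h₂]
    | tmul u v =>
      simp only [LinearMap.rTensor_tmul, LinearMap.lTensor_tmul, comulTwist_tmul]
      induction comul (R := k) v with
      | zero => simp
      | add t₁ t₂ h₁ h₂ => simp only [map_add, tmul_add, h₁, h₂]
      | tmul v₁ v₂ => simp
  have hcounit : TensorProduct.lift (N ∘ₗ f) ∘ₗ comul =
      LinearMap.toSpanSingleton k A a ∘ₗ counit := by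
    ext c
    simp [h]
  rw [key, coassoc_symm_apply, ← LinearMap.rTensor_comp_apply, hcounit,
    LinearMap.rTensor_comp_apply, rTensor_counit_comul]
  simp

lemma comulTwist_leftInverse (M N : A →ₗ[k] A →ₗ[k] A)
    (h : ∀ a c, TensorProduct.lift (N ∘ₗ M a) (comul c) = counit (R := k) c • a) :
    Function.LeftInverse (comulTwist k N) (comulTwist k M) := by
  intro t
  induction t with
  | zero => simp
  | add t₁ t₂ h₁ h₂ => simp only [map_add, h₁, h₂]
  | tmul a b => rw [comulTwist_tmul, comulTwist_rTensor_comul k N (M a) a b (h a)]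

lemma comulTwist_comul (M : A →ₗ[k] A →ₗ[k] A)
    (h : ∀ c, TensorProduct.lift M (comul c) = counit (R := k) c • (1 : A)) (x : A) :
    comulTwist k M (comul x) = 1 ⊗ₜ x := by
  simpa using comulTwist_rTensor_comul k M LinearMap.id 1 x h

lemma comulTwist_mul_one_tmul (M : A →ₗ[k] A →ₗ[k] A)
    (hM : ∀ a b c, M a (b * c) = M a b * c) (t : A ⊗[k] A) (y : A) :
    comulTwist k M (t * (1 ⊗ₜ y)) = comulTwist k M t * comul y := by
  have key (a : A) (s r : A ⊗[k] A) :
      (M a).rTensor A (s * r) = (M a).rTensor A s * r := by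
    induction s with
    | zero => simp
    | add s₁ s₂ h₁ h₂ => simp only [add_mul, map_add, h₁, h₂]
    | tmul u v =>
      induction r with
      | zero => simp
      | add r₁ r₂ h₁ h₂ => simp only [mul_add, map_add, h₁, h₂]
      | tmul w z => simp [hM]
  induction t with
  | zero => simp
  | add t₁ t₂ h₁ h₂ => simp only [add_mul, map_add, h₁, h₂]
  | tmul a b => simp [key]

lemma comulTwist_one_tmul_mul (M : A →ₗ[k] A →ₗ[k] A)
    (hM : ∀ a b c, M a (b * c) = b * M a c) (t : A ⊗[k] A) (y : A) :
    comulTwist k M ((1 ⊗ₜ y) * t) = comul y * comulTwist k M t := by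
  have key (a : A) (s r : A ⊗[k] A) :
      (M a).rTensor A (s * r) = s * (M a).rTensor A r := by
    induction s with
    | zero => simp
    | add s₁ s₂ h₁ h₂ => simp only [add_mul, map_add, h₁, h₂]
    | tmul u v =>
      induction r with
      | zero => simp
      | add r₁ r₂ h₁ h₂ => simp only [mul_add, map_add, h₁, h₂]
      | tmul w z => simp [hM]
  induction t with
  | zero => simp
  | add t₁ t₂ h₁ h₂ => simp only [mul_add, map_add, h₁, h₂]
  | tmul a b => simp [key]

lemma rTensor_mulLeft_apply (a : A) (t : A ⊗[k] A) :
    (LinearMap.mulLeft k a).rTensor A t = (a ⊗ₜ 1) * t := by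
  induction t with
  | zero => simp
  | add t₁ t₂ h₁ h₂ => simp only [mul_add, map_add, h₁, h₂]
  | tmul u v => simp

lemma rTensor_mulRight_apply (a : A) (t : A ⊗[k] A) :
    (LinearMap.mulRight k a).rTensor A t = t * (a ⊗ₜ 1) := by
  induction t with
  | zero => simp
  | add t₁ t₂ h₁ h₂ => simp only [add_mul, map_add, h₁, h₂]
  | tmul u v => simp

lemma comul_mul_one_tmul_eq_iff (Sinv : A →ₗ[k] A)
    (hinv : ∀ a : A, Sinv (antipode k a) = a) (x y : A) :
    comul (R := k) x * ((1 : A) ⊗ₜ[k] y) = x ⊗ₜ[k] y ↔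
      ((1 : A) ⊗ₜ[k] x) * comul (R := k) y = (antipode k x ⊗ₜ[k] (1 : A)) * comul (R := k) y := by
  let M : A →ₗ[k] A →ₗ[k] A := LinearMap.mul k A ∘ₗ antipode k
  let N : A →ₗ[k] A →ₗ[k] A := ((LinearMap.mul k A).compl₂ (antipode k)).compr₂ Sinv
  have hNM : Function.LeftInverse (comulTwist k N) (comulTwist k M) := by
    refine comulTwist_leftInverse k M N fun a c ↦ ?_
    rw [← (ℛ k c).eq]
    simp only [map_sum, lift.tmul, LinearMap.comp_apply, N, M, LinearMap.compr₂_apply,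
      LinearMap.compl₂_apply, LinearMap.mul_apply', mul_assoc]
    rw [← map_sum, ← Finset.mul_sum, sum_mul_antipode_eq_smul]
    simp [hinv]
  have hM : comulTwist k M (comul x) = 1 ⊗ₜ x := by
    refine comulTwist_comul k M (fun c ↦ ?_) x
    rw [← (ℛ k c).eq]
    simpa [M] using sum_antipode_mul_eq_smul (ℛ k c)
  rw [← hNM.injective.eq_iff, comulTwist_mul_one_tmul k M (by simp [M, mul_assoc]), hM,
    comulTwist_tmul, ← rTensor_mulLeft_apply k (antipode k x)]
  rfl

lemma one_tmul_mul_comul_eq_iff (Sinv : A →ₗ[k] A)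
    (hinv : ∀ a : A, Sinv (antipode k a) = a ∧ antipode k (Sinv a) = a) (x y : A) :
    ((1 : A) ⊗ₜ[k] y) * comul (R := k) x = x ⊗ₜ[k] y ↔
      comul (R := k) y * ((1 : A) ⊗ₜ[k] x) = comul (R := k) y * (Sinv x ⊗ₜ[k] (1 : A)) := by
  let M : A →ₗ[k] A →ₗ[k] A := (LinearMap.mul k A).flip ∘ₗ Sinv
  let N : A →ₗ[k] A →ₗ[k] A := LinearMap.mul k A ∘ₗ antipode k
  have hNM : Function.LeftInverse (comulTwist k N) (comulTwist k M) := by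
    refine comulTwist_leftInverse k M N fun a c ↦ ?_
    rw [← (ℛ k c).eq]
    simp only [map_sum, lift.tmul, LinearMap.comp_apply, N, M, LinearMap.flip_apply,
      LinearMap.mul_apply', antipode_mul_antidistrib, (hinv _).2, mul_assoc]
    rw [← Finset.mul_sum, sum_antipode_mul_eq_smul]
    simp
  have hM : comulTwist k M (comul x) = 1 ⊗ₜ x := by
    refine comulTwist_comul k M (fun c ↦ ?_) x
    apply Function.LeftInverse.injective (fun a ↦ (hinv a).1)
    rw [← (ℛ k c).eq]
    simpa [M, antipode_mul_antidistrib, (hinv _).2] using sum_mul_antipode_eq_smul (ℛ k c)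
  rw [← hNM.injective.eq_iff, comulTwist_one_tmul_mul k M (by simp [M, mul_assoc]), hM,
    comulTwist_tmul, ← rTensor_mulRight_apply k (Sinv x)]
  rfl

/-- Theorem: (i) `Δ(x)(1 ⊗ y) = x ⊗ y` iff `(1 ⊗ x)Δ(y) = (S(x) ⊗ 1)Δ(y)`;
(ii) `(1 ⊗ y)Δ(x) = x ⊗ y` iff `Δ(y)(1 ⊗ x) = Δ(y)(S⁻¹(x) ⊗ 1)`. -/
theorem statement18
    (Sinv : A →ₗ[k] A)
    (hinv : ∀ a : A, Sinv (HopfAlgebra.antipode (R := k) a) = a ∧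
      HopfAlgebra.antipode (R := k) (Sinv a) = a)
    (x y : A) :
    (Coalgebra.comul (R := k) x * ((1 : A) ⊗ₜ[k] y) = x ⊗ₜ[k] y ↔
      ((1 : A) ⊗ₜ[k] x) * Coalgebra.comul (R := k) y =
        (HopfAlgebra.antipode (R := k) x ⊗ₜ[k] (1 : A)) * Coalgebra.comul (R := k) y) ∧
    (((1 : A) ⊗ₜ[k] y) * Coalgebra.comul (R := k) x = x ⊗ₜ[k] y ↔
      Coalgebra.comul (R := k) y * ((1 : A) ⊗ₜ[k] x) =
        Coalgebra.comul (R := k) y * (Sinv x ⊗ₜ[k] (1 : A))) := by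
  exact ⟨comul_mul_one_tmul_eq_iff k Sinv (fun a ↦ (hinv a).1) x y,
    one_tmul_mul_comul_eq_iff k Sinv hinv x y⟩
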